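/- Under the stream setup, let I, K ⊆ E be disjoint, put B := I ∪ K, let γ > 0 and F ≥ 0 be reals, and let T ⊆ E. Suppose (i) C(e) ⊆ {e' ∈ B : e' < e} for every e ∈ E, (ii) {e' ∈ I : e' < e} ⊆ C(e) for every e ∈ I, (iii) w(K) ≤ w(I)/γ, and (iv) w(T) ≤ F·w(I). Then f(T) ≤ (F + 1 + 1/γ)·f(I). -/

import Mathlib

/-!
Adding the elements of `S` one at a time in increasing order telescopes `f S - f ∅` into the
marginal gains of each `e ∈ S` over its predecessors in `S`. Submodularity makes marginal gains
decrease in the base set, so comparing `C e` with those predecessors bounds the total weight of a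
set: `C e` contained in the predecessors within `I ∪ K` gives `f (I ∪ K) - f ∅ ≤ w(I ∪ K)`, while
`C e` containing the predecessors within `I` gives `w(I) ≤ f I - f ∅`. Finally, adding `T` to
`I ∪ K` gains at most `w(T)`, and each of `w(T)`, `w(K)` is a multiple of `w(I)`.
-/

/-- A set function on finite sets with decreasing returns, in its lattice form
`f (A ∪ B) + f (A ∩ B) ≤ f A + f B`. -/
def Submodular {α G : Type*} [DecidableEq α] [Add G] [LE G] (f : Finset α → G) : Prop :=
  ∀ A B : Finset α, f (A ∪ B) + f (A ∩ B) ≤ f A + f B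

/-- The gain in `f` from adding the element `e` to the set `A`; the weight `w(e)` of the stream
setup is `marginalGain f (C e) e`. -/
def marginalGain {α G : Type*} [DecidableEq α] [Sub G] (f : Finset α → G) (A : Finset α) (e : α) :
    G :=
  f (insert e A) - f A

section MarginalGain

variable {α G : Type*} [AddCommGroup G]

theorem sum_marginalGain_filter_lt [LinearOrder α] (f : Finset α → G) (S : Finset α) :
    ∑ e ∈ S, marginalGain f (S.filter (· < e)) e = f S - f ∅ := by
  induction S using Finset.induction_on_max with
  | empty => simp
  | insert a s ha ih =>
    have ha_notMem : a ∉ s := fun h => lt_irrefl a (ha a h)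
    have filter_lt_max : (insert a s).filter (· < a) = s := by
      rw [Finset.filter_insert, if_neg (lt_irrefl a), Finset.filter_true_of_mem ha]
    have filter_lt_of_mem : ∀ e ∈ s, (insert a s).filter (· < e) = s.filter (· < e) :=
      fun e he => by rw [Finset.filter_insert, if_neg (ha e he).asymm]
    calc ∑ e ∈ insert a s, marginalGain f ((insert a s).filter (· < e)) e
        = marginalGain f s a + ∑ e ∈ s, marginalGain f (s.filter (· < e)) e := by
          rw [Finset.sum_insert ha_notMem, filter_lt_max]
          exact congrArg _ (Finset.sum_congr rfl fun e he => by rw [filter_lt_of_mem e he])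
      _ = f (insert a s) - f ∅ := by rw [ih, marginalGain, sub_add_sub_cancel]

variable [PartialOrder G] [IsOrderedAddMonoid G] {f : Finset α → G}

theorem marginalGain_nonneg [DecidableEq α] (hmono : Monotone f) (A : Finset α) (e : α) :
    0 ≤ marginalGain f A e :=
  sub_nonneg.mpr (hmono (Finset.subset_insert e A))

namespace Submodular

theorem marginalGain_le_of_subset [DecidableEq α] (hf : Submodular f) {A D : Finset α} {e : α}
    (hAD : A ⊆ D) (he : e ∉ D) : marginalGain f D e ≤ marginalGain f A e := by
  have h := hf (insert e A) D
  rw [Finset.insert_union, Finset.union_eq_right.mpr hAD,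
    Finset.insert_inter_of_notMem he, Finset.inter_eq_left.mpr hAD] at h
  exact sub_le_sub_iff.mpr h

theorem antitone_marginalGain [DecidableEq α] (hf : Submodular f) (hmono : Monotone f) (e : α) :
    Antitone fun A => marginalGain f A e := by
  intro A D hAD
  by_cases he : e ∈ D
  · calc marginalGain f D e = 0 := by rw [marginalGain, Finset.insert_eq_of_mem he, sub_self]
      _ ≤ marginalGain f A e := marginalGain_nonneg hmono A e
  · exact hf.marginalGain_le_of_subset hAD he

theorem apply_union_le_add_sum_marginalGain [DecidableEq α] (hf : Submodular f)
    (hmono : Monotone f) {C : α → Finset α} {B S : Finset α} (hC : ∀ e ∈ S, C e ⊆ B) :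
    f (B ∪ S) ≤ f B + ∑ e ∈ S, marginalGain f (C e) e := by
  induction S using Finset.induction_on with
  | empty => simp
  | insert a s ha ih =>
    have gain_le : marginalGain f (B ∪ s) a ≤ marginalGain f (C a) a :=
      hf.antitone_marginalGain hmono a
        ((hC a (Finset.mem_insert_self a s)).trans Finset.subset_union_left)
    calc f (B ∪ insert a s) = marginalGain f (B ∪ s) a + f (B ∪ s) := by
          rw [Finset.union_insert, marginalGain, sub_add_cancel]
      _ ≤ marginalGain f (C a) a + (f B + ∑ e ∈ s, marginalGain f (C e) e) :=
          add_le_add gain_le (ih fun e he => hC e (Finset.mem_insert_of_mem he))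
      _ = f B + ∑ e ∈ insert a s, marginalGain f (C e) e := by
          rw [Finset.sum_insert ha, add_left_comm]

variable [LinearOrder α] {C : α → Finset α} {S : Finset α}

theorem sub_apply_empty_le_sum_marginalGain (hf : Submodular f)
    (hC : ∀ e ∈ S, C e ⊆ S.filter (· < e)) :
    f S - f ∅ ≤ ∑ e ∈ S, marginalGain f (C e) e := by
  rw [← sum_marginalGain_filter_lt f S]
  exact Finset.sum_le_sum fun e he => hf.marginalGain_le_of_subset (hC e he) (by simp)

theorem sum_marginalGain_le_sub_apply_empty (hf : Submodular f)
    (hC : ∀ e ∈ S, S.filter (· < e) ⊆ C e) (hnotMem : ∀ e ∈ S, e ∉ C e) :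
    ∑ e ∈ S, marginalGain f (C e) e ≤ f S - f ∅ := by
  rw [← sum_marginalGain_filter_lt f S]
  exact Finset.sum_le_sum fun e he => hf.marginalGain_le_of_subset (hC e he) (hnotMem e he)

end Submodular

end MarginalGain

theorem sum_union_le_of_nonneg {ι G : Type*} [DecidableEq ι] [AddCommMonoid G] [PartialOrder G]
    [IsOrderedAddMonoid G] {w : ι → G} {s t : Finset ι} (hw : ∀ i ∈ s ∩ t, 0 ≤ w i) :
    ∑ i ∈ s ∪ t, w i ≤ ∑ i ∈ s, w i + ∑ i ∈ t, w i := by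
  rw [← Finset.sum_union_inter]
  exact le_add_of_nonneg_right (Finset.sum_nonneg hw)

theorem stmt_6_general {α 𝕜 : Type*} [LinearOrder α]
    [Field 𝕜] [LinearOrder 𝕜] [IsStrictOrderedRing 𝕜]
    {f : Finset α → 𝕜} (hsub : Submodular f) (hmono : Monotone f)
    {C : α → Finset α} {I K T : Finset α} {γ F : 𝕜} (hγ : 0 < γ) (hF : 0 ≤ F)
    (hCB : ∀ e, C e ⊆ (I ∪ K).filter (· < e))
    (hI : ∀ e ∈ I, I.filter (· < e) ⊆ C e)
    (hK : ∑ e ∈ K, marginalGain f (C e) e ≤ (∑ e ∈ I, marginalGain f (C e) e) / γ)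
    (hT : ∑ e ∈ T, marginalGain f (C e) e ≤ F * ∑ e ∈ I, marginalGain f (C e) e) :
    f T - f ∅ ≤ (F + 1 + 1 / γ) * (f I - f ∅) := by
  set w : α → 𝕜 := fun e => marginalGain f (C e) e
  have f_T_le : f T ≤ f (I ∪ K) + ∑ e ∈ T, w e :=
    (hmono Finset.subset_union_right).trans <|
      hsub.apply_union_le_add_sum_marginalGain hmono
        fun e _ => (hCB e).trans (Finset.filter_subset _ _)
  have f_union_le : f (I ∪ K) - f ∅ ≤ ∑ e ∈ I ∪ K, w e :=
    hsub.sub_apply_empty_le_sum_marginalGain fun e _ => hCB e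
  have w_union_le : ∑ e ∈ I ∪ K, w e ≤ ∑ e ∈ I, w e + ∑ e ∈ K, w e :=
    sum_union_le_of_nonneg fun e _ => marginalGain_nonneg hmono (C e) e
  have w_I_le : ∑ e ∈ I, w e ≤ f I - f ∅ :=
    hsub.sum_marginalGain_le_sub_apply_empty hI
      fun e _ he => lt_irrefl e (Finset.mem_filter.mp (hCB e he)).2
  calc f T - f ∅ ≤ ∑ e ∈ I, w e + ∑ e ∈ K, w e + ∑ e ∈ T, w e := by linarith
    _ ≤ ∑ e ∈ I, w e + (∑ e ∈ I, w e) / γ + F * ∑ e ∈ I, w e := by gcongr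
    _ = (F + 1 + 1 / γ) * ∑ e ∈ I, w e := by ring
    _ ≤ (F + 1 + 1 / γ) * (f I - f ∅) := by gcongr

/-- Lemma 2.2 (combinatorial form, modular to submodular): the `f`-extension of
an `F`-approximate compliant algorithm with parameter `γ` computes an
`(F + 1 + 1/γ)`-approximate maximum submodular independent set. Here `I` is the
output, `K` the killed elements, `T` an optimal solution, and
`w(e) := f(C(e) ∪ {e}) − f(C(e))`. -/
theorem stmt_6 {α : Type*} [Fintype α] [LinearOrder α]
    (f : Finset α → ℝ)
    (hsub : ∀ A B : Finset α, f (A ∪ B) + f (A ∩ B) ≤ f A + f B)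
    (hmono : ∀ A B : Finset α, A ⊆ B → f A ≤ f B)
    (hproper : f ∅ = 0)
    (hnonneg : ∀ A : Finset α, 0 ≤ f A)
    (C : α → Finset α)
    (hC : ∀ e, ∀ e' ∈ C e, e' < e)
    (I K : Finset α) (hdisj : Disjoint I K)
    (γ F : ℝ) (hγ : 0 < γ) (hF : 0 ≤ F)
    (T : Finset α)
    (hCB : ∀ e : α, C e ⊆ (I ∪ K).filter (fun e' => e' < e))
    (hI : ∀ e ∈ I, I.filter (fun e' => e' < e) ⊆ C e)
    (hK : ∑ e ∈ K, (f (insert e (C e)) - f (C e))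
        ≤ (∑ e ∈ I, (f (insert e (C e)) - f (C e))) / γ)
    (hT : ∑ e ∈ T, (f (insert e (C e)) - f (C e))
        ≤ F * ∑ e ∈ I, (f (insert e (C e)) - f (C e))) :
    f T ≤ (F + 1 + 1 / γ) * f I := by
  simpa only [hproper, sub_zero] using stmt_6_general hsub hmono hγ hF hCB hI hK hT
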